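/- arXiv:0803.3088 — 5 statements merged into one kernel-verified Lean document; each statement's English description precedes it below -/
import Mathlib

section
/- Let α = [[1,4],[0,1]], β = [[1, 1+√3·i],[0,1]], and γ = [[2,−1],[1,0]], regarded as elements of SL(2,ℂ). The group homomorphism from the free product (ℤ × ℤ) ∗ ℤ to SL(2,ℂ) determined by sending the generator (1,0) of ℤ × ℤ to α, the generator (0,1) of ℤ × ℤ to β, and the generator of the ℤ factor to γ, is injective. In particular the subgroup of SL(2,ℂ) generated by α, β, γ is isomorphic to (ℤ × ℤ) ∗ ℤ. -/
/-!
Ping-pong on `ℂ²`, regarded as homogeneous coordinates `z = x / y`. The group `⟨α, β⟩` consists of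
the translations of `z` by the lattice `4ℤ + 2ωℤ`, `ω = (1 + √3 i) / 2`, while `γ` is the translation
`w ↦ w + 1` in the coordinate `w = 1 / (z - 1)`. Let `D` be the union of the open unit discs about
`0` and `2` and let `U` be the complement (in the Riemann sphere) of the union of the closed discs.

* In the coordinate `w` the set `U` is the strip `|Re w| < 1/2` and `D` is `|Re w| > 1/2`, so each
  nontrivial power of `γ` maps `U` into `D` (`parabolic_maps_outer`).
* The translates of the two discs by the lattice form the hexagonal packing by unit discs centred at
  `2ℤ + 2ωℤ`, all of them disjoint because `|k + nω|² = k² + kn + n² ≥ 1` for `(k, n) ≠ 0`; hence each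
  nontrivial lattice translation maps `D` into `U` (`translation_maps_discs`).

Working with vectors instead of points of the Riemann sphere avoids a separate treatment of `∞`.
-/

open Matrix

/-- The matrix α = [[1,4],[0,1]] as an element of SL(2,ℂ). -/
noncomputable def agolAlpha : Matrix.SpecialLinearGroup (Fin 2) ℂ :=
  ⟨!![1, 4; 0, 1], by norm_num [Matrix.det_fin_two_of]⟩

/-- The matrix β = [[1, 1+√3·i],[0,1]] as an element of SL(2,ℂ). -/
noncomputable def agolBeta : Matrix.SpecialLinearGroup (Fin 2) ℂ :=
  ⟨!![1, 1 + Real.sqrt 3 * Complex.I; 0, 1], by norm_num [Matrix.det_fin_two_of]⟩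

/-- The matrix γ = [[2,−1],[1,0]] as an element of SL(2,ℂ). -/
noncomputable def agolGamma : Matrix.SpecialLinearGroup (Fin 2) ℂ :=
  ⟨!![2, -1; 1, 0], by norm_num [Matrix.det_fin_two_of]⟩

open scoped Pointwise Cardinal

/-- The two-member family `A, B` indexed by `Bool`. -/
def boolFamily (A B : Type) : Bool → Type
  | false => A
  | true => B

instance boolFamilyGroup (A B : Type) [Group A] [Group B] : ∀ b, Group (boolFamily A B b)
  | false => inferInstanceAs (Group A)
  | true => inferInstanceAs (Group B)

/-- Two homomorphisms with a common target, as a family of homomorphisms indexed by `Bool`. -/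
def boolHom {A B K : Type} [Group A] [Group B] [Group K] (f : A →* K) (g : B →* K) :
    ∀ b, boolFamily A B b →* K
  | false => f
  | true => g

/-- The ping-pong lemma for the binary free product, deduced from the one for indexed families. -/
theorem coprod_injective_of_ping_pong {A B K : Type} [Group A] [Group B] [Group K]
    {X : Type*} [MulAction K X] (φ : Monoid.Coprod A B →* K) (hcard : 3 ≤ #A)
    (U D : Set X) (hU : U.Nonempty) (hD : D.Nonempty) (hUD : Disjoint U D)
    (hA : ∀ a : A, a ≠ 1 → ∀ v ∈ D, φ (Monoid.Coprod.inl a) • v ∈ U)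
    (hB : ∀ b : B, b ≠ 1 → ∀ v ∈ U, φ (Monoid.Coprod.inr b) • v ∈ D) :
    Function.Injective φ := by
  let f : ∀ b, boolFamily A B b →* K := boolHom (φ.comp Monoid.Coprod.inl) (φ.comp Monoid.Coprod.inr)
  let Y : Bool → Set X := fun b => Bool.rec U D b
  have key : Function.Injective (Monoid.CoprodI.lift f) := by
    refine Monoid.CoprodI.lift_injective_of_ping_pong f (Or.inr ⟨false, hcard⟩) Y ?_ ?_ ?_
    · rintro (_ | _)
      · exact hU
      · exact hD
    · rintro (_ | _) (_ | _) h
      · exact absurd rfl h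
      · exact hUD
      · exact hUD.symm
      · exact absurd rfl h
    · rintro (_ | _) (_ | _) h
      · exact absurd rfl h
      · rintro a ha _ ⟨v, hv, rfl⟩
        exact hA a ha v hv
      · rintro b hb _ ⟨v, hv, rfl⟩
        exact hB b hb v hv
      · exact absurd rfl h
  let e : Monoid.Coprod A B →* Monoid.CoprodI (boolFamily A B) :=
    Monoid.Coprod.lift (Monoid.CoprodI.of (M := boolFamily A B) (i := false))
      (Monoid.CoprodI.of (M := boolFamily A B) (i := true))
  let g : ∀ b, boolFamily A B b →* Monoid.Coprod A B := boolHom Monoid.Coprod.inl Monoid.Coprod.inr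
  have hge : (Monoid.CoprodI.lift g).comp e = MonoidHom.id _ := by
    refine Monoid.Coprod.hom_ext ?_ ?_
    · ext a
      exact Monoid.CoprodI.lift_of (M := boolFamily A B) g (i := false) a
    · ext b
      exact Monoid.CoprodI.lift_of (M := boolFamily A B) g (i := true) b
  have hfe : (Monoid.CoprodI.lift f).comp e = φ := by
    refine Monoid.Coprod.hom_ext ?_ ?_
    · ext a
      exact Monoid.CoprodI.lift_of (M := boolFamily A B) f (i := false) a
    · ext b
      exact Monoid.CoprodI.lift_of (M := boolFamily A B) f (i := true) b
  have he : Function.Injective e :=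
    Function.LeftInverse.injective (g := Monoid.CoprodI.lift g) fun x => DFunLike.congr_fun hge x
  rw [← hfe]
  exact key.comp he

/-- The unipotent subgroup of translations `z ↦ z + c`. -/
noncomputable def translationHom : Multiplicative ℂ →* Matrix.SpecialLinearGroup (Fin 2) ℂ where
  toFun c := ⟨!![1, c.toAdd; 0, 1], by norm_num [Matrix.det_fin_two_of]⟩
  map_one' := by
    ext i j; fin_cases i <;> fin_cases j <;> simp
  map_mul' a b := by
    apply Subtype.ext
    change !![1, a.toAdd + b.toAdd; 0, 1] = !![1, a.toAdd; 0, 1] * !![1, b.toAdd; 0, 1]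
    simp [add_comm]

theorem toLin'_translationHom (c : ℂ) (v : Fin 2 → ℂ) :
    Matrix.SpecialLinearGroup.toLin' (translationHom (Multiplicative.ofAdd c)) v =
      ![v 0 + c * v 1, v 1] := by
  change Matrix.toLin' !![1, c; 0, 1] v = _
  ext i
  fin_cases i <;> simp [Matrix.mulVec, dotProduct, Fin.sum_univ_two]

/-- The unipotent subgroup fixing `z = 1`, acting by `w ↦ w + c` on `w = 1 / (z - 1)`. -/
noncomputable def parabolicHom : Multiplicative ℂ →* Matrix.SpecialLinearGroup (Fin 2) ℂ where
  toFun c := ⟨!![1 + c.toAdd, -c.toAdd; c.toAdd, 1 - c.toAdd], by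
    rw [Matrix.det_fin_two_of]; ring⟩
  map_one' := by
    ext i j; fin_cases i <;> fin_cases j <;> simp
  map_mul' a b := by
    apply Subtype.ext
    generalize hx : a.toAdd = x
    generalize hy : b.toAdd = y
    change !![1 + (a.toAdd + b.toAdd), -(a.toAdd + b.toAdd); a.toAdd + b.toAdd,
      1 - (a.toAdd + b.toAdd)] = !![1 + x, -x; x, 1 - x] * !![1 + y, -y; y, 1 - y]
    rw [hx, hy, Matrix.mul_fin_two]
    congr 1
    ext i j
    fin_cases i <;> fin_cases j <;> simp <;> ring

theorem toLin'_parabolicHom (c : ℂ) (v : Fin 2 → ℂ) :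
    Matrix.SpecialLinearGroup.toLin' (parabolicHom (Multiplicative.ofAdd c)) v =
      ![v 0 + c * (v 0 - v 1), v 1 + c * (v 0 - v 1)] := by
  change Matrix.toLin' !![1 + c, -c; c, 1 - c] v = _
  ext i
  fin_cases i <;> simp [Matrix.mulVec, dotProduct, Fin.sum_univ_two] <;> ring

/-- The vectors `(x, y)` with `x / y` in the open unit disc about `0` or about `2`. -/
def discs : Set (Fin 2 → ℂ) := {v | ‖v 0 - 2 * v 1‖ < ‖v 1‖ ∨ ‖v 0‖ < ‖v 1‖}

/-- The vectors `(x, y)` with `x / y ∈ ℂ ∪ {∞}` outside both closed unit discs about `0` and `2`. -/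
def outer : Set (Fin 2 → ℂ) := {v | ‖v 1‖ < ‖v 0 - 2 * v 1‖ ∧ ‖v 1‖ < ‖v 0‖}

theorem norm_lt_iff_normSq (a b : ℂ) : ‖a‖ < ‖b‖ ↔ Complex.normSq a < Complex.normSq b := by
  rw [Complex.normSq_eq_norm_sq, Complex.normSq_eq_norm_sq]
  exact (sq_lt_sq₀ (norm_nonneg _) (norm_nonneg _)).symm

/-- A nonzero integral translation in the coordinate `w = y / (x - y)` leaves the strip
`|Re w| < 1/2`, which is `outer`, for its exterior, which is `discs`. -/
theorem parabolic_maps_outer (n : ℤ) (hn : n ≠ 0) (v : Fin 2 → ℂ) (hv : v ∈ outer) :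
    Matrix.SpecialLinearGroup.toLin' (parabolicHom (Multiplicative.ofAdd (n : ℂ))) v ∈ discs := by
  obtain ⟨h1, h2⟩ := hv
  rw [norm_lt_iff_normSq] at h1 h2
  simp only [discs, Set.mem_ofPred_eq, norm_lt_iff_normSq, toLin'_parabolicHom,
    Matrix.cons_val_zero, Matrix.cons_val_one]
  generalize v 0 = x at *
  generalize v 1 = y at *
  simp only [Complex.normSq_apply, Complex.add_re, Complex.add_im, Complex.sub_re, Complex.sub_im,
    Complex.mul_re, Complex.mul_im, Complex.intCast_re,
    Complex.intCast_im, Complex.re_ofNat, Complex.im_ofNat]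
    at h1 h2 ⊢
  -- With `b = |x - y|²` and `a = 2 Re (y * conj (x - y))`, `h1` and `h2` say `|a| < b`; the map fixes
  -- `b` and sends `a` to `a + 2nb`.
  have hb : 0 < (x.re - y.re) ^ 2 + (x.im - y.im) ^ 2 := by nlinarith
  rcases lt_or_gt_of_ne hn with h | h
  · right
    have h' : (n : ℝ) + 1 ≤ 0 := by exact_mod_cast h
    nlinarith [mul_nonneg (neg_nonneg.2 h') hb.le]
  · left
    have h' : (1 : ℝ) ≤ n := by exact_mod_cast h
    nlinarith [mul_nonneg (sub_nonneg.2 h') hb.le]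

/-- The nonzero vectors `2k + 2nω` of the hexagonal lattice have length at least `2`. -/
theorem two_le_norm_hexagonal (k n : ℤ) (h : k ≠ 0 ∨ n ≠ 0) :
    2 ≤ ‖2 * (k : ℂ) + n * (1 + Real.sqrt 3 * Complex.I)‖ := by
  have hq : 1 ≤ k ^ 2 + k * n + n ^ 2 := by
    by_contra hlt
    have hn : n = 0 := by
      by_contra hn
      have := sq_nonneg (2 * k + n)
      have : 0 < n ^ 2 := by positivity
      nlinarith
    subst hn
    have : 0 < k ^ 2 := by
      have : k ≠ 0 := by simpa using h
      positivity
    nlinarith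
  have hq' : (1 : ℝ) ≤ k ^ 2 + k * n + n ^ 2 := by exact_mod_cast hq
  have h3 : Real.sqrt 3 * Real.sqrt 3 = 3 := Real.mul_self_sqrt (by norm_num)
  have hs : ‖2 * (k : ℂ) + n * (1 + Real.sqrt 3 * Complex.I)‖ ^ 2
      = 4 * (k ^ 2 + k * n + n ^ 2) := by
    rw [← Complex.normSq_eq_norm_sq, Complex.normSq_apply]
    simp
    linear_combination (n : ℝ) ^ 2 * h3
  nlinarith [norm_nonneg (2 * (k : ℂ) + n * (1 + Real.sqrt 3 * Complex.I))]

theorem norm_lt_norm_add_mul {t y c : ℂ} (ht : ‖t‖ < ‖y‖) (hc : 2 ≤ ‖c‖) : ‖y‖ < ‖t + c * y‖ := by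
  have h1 : ‖c * y‖ ≤ ‖t + c * y‖ + ‖t‖ := by
    simpa using norm_sub_le (t + c * y) t
  rw [norm_mul] at h1
  nlinarith [norm_nonneg t]

theorem translation_maps_discs (m n : ℤ) (h : m ≠ 0 ∨ n ≠ 0) (v : Fin 2 → ℂ) (hv : v ∈ discs) :
    Matrix.SpecialLinearGroup.toLin' (translationHom (Multiplicative.ofAdd
      (m * 4 + n * (1 + Real.sqrt 3 * Complex.I)))) v ∈ outer := by
  simp only [outer, Set.mem_ofPred_eq, toLin'_translationHom,
    Matrix.cons_val_zero, Matrix.cons_val_one]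
  -- The three differences between the centre of a moved disc and that of a fixed disc.
  have c0 := two_le_norm_hexagonal (2 * m) n (by omega)
  have c1 := two_le_norm_hexagonal (2 * m + 1) n (by omega)
  have c2 := two_le_norm_hexagonal (2 * m - 1) n (by omega)
  rcases hv with hv | hv
  · constructor
    · convert norm_lt_norm_add_mul hv c0 using 2
      push_cast; ring
    · convert norm_lt_norm_add_mul hv c1 using 2
      push_cast; ring
  · constructor
    · convert norm_lt_norm_add_mul hv c2 using 2
      push_cast; ring
    · convert norm_lt_norm_add_mul hv c0 using 2
      push_cast; ring

/-- Any homomorphism from the free product (ℤ × ℤ) ∗ ℤ to SL(2,ℂ) sending the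
generator (1,0) of ℤ × ℤ to α, the generator (0,1) of ℤ × ℤ to β, and the
generator of ℤ to γ is injective; in particular, its range, the subgroup of
SL(2,ℂ) generated by α, β, γ, is isomorphic to (ℤ × ℤ) ∗ ℤ. -/
theorem free_product_bicuspid_injective
    (φ : Monoid.Coprod (Multiplicative (ℤ × ℤ)) (Multiplicative ℤ) →*
      Matrix.SpecialLinearGroup (Fin 2) ℂ)
    (hα : φ (Monoid.Coprod.inl (Multiplicative.ofAdd ((1, 0) : ℤ × ℤ))) = agolAlpha)
    (hβ : φ (Monoid.Coprod.inl (Multiplicative.ofAdd ((0, 1) : ℤ × ℤ))) = agolBeta)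
    (hγ : φ (Monoid.Coprod.inr (Multiplicative.ofAdd (1 : ℤ))) = agolGamma) :
    Function.Injective φ ∧
      φ.range = Subgroup.closure {agolAlpha, agolBeta, agolGamma} := by
  have ha : agolAlpha = translationHom (Multiplicative.ofAdd 4) := rfl
  have hb : agolBeta = translationHom (Multiplicative.ofAdd (1 + Real.sqrt 3 * Complex.I)) := rfl
  have hc : agolGamma = parabolicHom (Multiplicative.ofAdd 1) := by
    apply Subtype.ext
    change !![2, -1; 1, 0] = !![1 + (1 : ℂ), -1; 1, 1 - 1]
    norm_num
  have split (a : Multiplicative (ℤ × ℤ)) : a = Multiplicative.ofAdd ((1, 0) : ℤ × ℤ) ^ a.toAdd.1 *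
      Multiplicative.ofAdd ((0, 1) : ℤ × ℤ) ^ a.toAdd.2 := by
    rw [← ofAdd_zsmul, ← ofAdd_zsmul, ← ofAdd_add]
    apply Multiplicative.toAdd.injective
    ext <;> simp
  have splitγ (b : Multiplicative ℤ) : b = Multiplicative.ofAdd (1 : ℤ) ^ b.toAdd := by
    rw [← ofAdd_zsmul]
    apply Multiplicative.toAdd.injective
    simp
  have hl (a : Multiplicative (ℤ × ℤ)) : φ (Monoid.Coprod.inl a) =
      agolAlpha ^ a.toAdd.1 * agolBeta ^ a.toAdd.2 := by
    conv_lhs => rw [split a]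
    rw [map_mul, map_mul, map_zpow, map_zpow, map_zpow, map_zpow, hα, hβ]
  have hr (b : Multiplicative ℤ) : φ (Monoid.Coprod.inr b) = agolGamma ^ b.toAdd := by
    conv_lhs => rw [splitγ b]
    rw [map_zpow, map_zpow, hγ]
  constructor
  · have hinj : Function.Injective ((Matrix.SpecialLinearGroup.toLin').comp φ) := by
      refine coprod_injective_of_ping_pong (X := Fin 2 → ℂ) _ ?_ outer discs ?_ ?_ ?_ ?_ ?_
      -- `ℤ × ℤ` is infinite, hence has at least three elements.
      · refine le_trans ?_ (Cardinal.aleph0_le_mk _)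
        exact (Cardinal.natCast_lt_aleph0 (n := 3)).le
      · exact ⟨![1, 0], by simp [outer]⟩
      · exact ⟨![0, 1], by simp [discs]⟩
      · rw [Set.disjoint_left]
        rintro v ⟨h1, h2⟩ (h | h)
        · exact lt_asymm h h1
        · exact lt_asymm h h2
      · intro a h v hv
        have h' : a.toAdd.1 ≠ 0 ∨ a.toAdd.2 ≠ 0 := by
          by_contra! hcon
          exact h (Multiplicative.toAdd.injective (Prod.ext hcon.1 hcon.2))
        have := translation_maps_discs _ _ h' v hv
        rw [MonoidHom.comp_apply, hl, ha, hb, ← map_zpow translationHom, ← map_zpow translationHom,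
          ← map_mul translationHom, ← ofAdd_zsmul,
          ← ofAdd_zsmul, ← ofAdd_add, zsmul_eq_mul, zsmul_eq_mul]
        exact this
      · intro b h v hv
        have h' : b.toAdd ≠ 0 := fun hcon => h (Multiplicative.toAdd.injective hcon)
        have := parabolic_maps_outer _ h' v hv
        rw [MonoidHom.comp_apply, hr, hc, ← map_zpow parabolicHom, ← ofAdd_zsmul, zsmul_eq_mul, mul_one]
        exact this
    exact Function.Injective.of_comp (f := Matrix.SpecialLinearGroup.toLin') hinj
  · apply le_antisymm
    · rintro _ ⟨x, rfl⟩
      induction x using Monoid.Coprod.induction_on with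
      | inl a =>
        rw [hl]
        exact mul_mem (zpow_mem (Subgroup.subset_closure (by simp)) _)
          (zpow_mem (Subgroup.subset_closure (by simp)) _)
      | inr b =>
        rw [hr]
        exact zpow_mem (Subgroup.subset_closure (by simp)) _
      | mul x y hx hy =>
        rw [map_mul]
        exact mul_mem hx hy
    · rw [Subgroup.closure_le]
      rintro _ (rfl | rfl | rfl)
      · exact ⟨_, hα⟩
      · exact ⟨_, hβ⟩
      · exact ⟨_, hγ⟩
end

section
/- Let α = [[1,4],[0,1]], β = [[1, 1+√3·i],[0,1]], and γ = [[2,−1],[1,0]], regarded as elements of SL(2,ℂ). The subgroup of SL(2,ℂ) generated by α, β, γ is a discrete subgroup, i.e., the subspace topology it inherits from SL(2,ℂ) is the discrete topology. -/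
/-!
All entries of α, β, γ lie in the ring ℤ[√-3] ⊆ ℂ, so the generated subgroup consists of matrices
with entries in that ring (`entries_mem_zSqrtNegThree`). A nonzero `a + b√-3` has squared modulus
`a² + 3b² ≥ 1`, so ℤ[√-3] is discrete in ℂ. Taking entries is then a continuous injection from the
subgroup into the discrete space of 2×2 arrays over ℤ[√-3], which forces the subgroup to be
discrete.
-/

open Matrix

/-- SL(2,ℂ) topologized as a subspace of the 2×2 complex matrices with their
standard topology. -/
noncomputable instance : TopologicalSpace (Matrix.SpecialLinearGroup (Fin 2) ℂ) :=
  TopologicalSpace.induced (fun g => (g : Matrix (Fin 2) (Fin 2) ℂ)) inferInstance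

/-- The ring ℤ[√-3], as the subring of ℂ of all `a + b√3·i` with `a`, `b` integers. -/
noncomputable def zSqrtNegThree : Subring ℂ where
  carrier := {z | ∃ a b : ℤ, z = a + b * (Real.sqrt 3 * Complex.I)}
  zero_mem' := ⟨0, 0, by simp⟩
  one_mem' := ⟨1, 0, by simp⟩
  add_mem' := by
    rintro _ _ ⟨a, b, rfl⟩ ⟨c, d, rfl⟩
    exact ⟨a + c, b + d, by push_cast; ring⟩
  neg_mem' := by
    rintro _ ⟨a, b, rfl⟩
    exact ⟨-a, -b, by push_cast; ring⟩
  mul_mem' := by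
    rintro _ _ ⟨a, b, rfl⟩ ⟨c, d, rfl⟩
    refine ⟨a * c - 3 * b * d, a * d + b * c, ?_⟩
    have h3 : (Real.sqrt 3 : ℂ) ^ 2 = 3 := by
      rw [← Complex.ofReal_pow, Real.sq_sqrt (by norm_num)]
      norm_num
    have h : (Real.sqrt 3 * Complex.I) ^ 2 = -3 := by
      rw [mul_pow, h3, Complex.I_sq]
      ring
    push_cast
    linear_combination (b * d : ℂ) * h

lemma one_le_norm_of_mem_zSqrtNegThree {z : ℂ} (hz : z ∈ zSqrtNegThree) (h0 : z ≠ 0) :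
    1 ≤ ‖z‖ := by
  obtain ⟨a, b, rfl⟩ := hz
  have hnorm : ‖(a + b * (Real.sqrt 3 * Complex.I) : ℂ)‖ ^ 2 = ((a ^ 2 + 3 * b ^ 2 : ℤ) : ℝ) := by
    have h3 : Real.sqrt 3 ^ 2 = 3 := Real.sq_sqrt (by norm_num)
    rw [Complex.sq_norm, Complex.normSq_apply]
    simp
    linear_combination (b : ℝ) ^ 2 * h3
  have hpos : 0 < a ^ 2 + 3 * b ^ 2 := by
    have := pow_pos (norm_pos_iff.mpr h0) 2
    rw [hnorm] at this
    exact_mod_cast this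
  have hone : (1 : ℝ) ≤ ((a ^ 2 + 3 * b ^ 2 : ℤ) : ℝ) := by exact_mod_cast hpos
  rw [← hnorm] at hone
  exact (one_le_sq_iff₀ (norm_nonneg _)).mp hone

instance : DiscreteTopology zSqrtNegThree := by
  refine DiscreteTopology.of_forall_le_dist (r := 1) one_pos fun x y hxy => ?_
  change 1 ≤ dist x y
  rw [Subtype.dist_eq, dist_eq_norm]
  exact one_le_norm_of_mem_zSqrtNegThree (sub_mem x.2 y.2)
    (sub_ne_zero.mpr fun h => hxy (Subtype.ext h))

lemma entries_mem_zSqrtNegThree {g : Matrix.SpecialLinearGroup (Fin 2) ℂ}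
    (hg : g ∈ Subgroup.closure {agolAlpha, agolBeta, agolGamma}) (i j : Fin 2) :
    g.1 i j ∈ zSqrtNegThree := by
  have hb : (1 + Real.sqrt 3 * Complex.I : ℂ) ∈ zSqrtNegThree := ⟨1, 1, by simp⟩
  have hm : (-1 : ℂ) ∈ zSqrtNegThree := neg_mem (one_mem _)
  induction hg using Subgroup.closure_induction generalizing i j with
  | mem x hx =>
    rcases hx with rfl | rfl | rfl <;> fin_cases i <;> fin_cases j <;>
      simp [agolAlpha, agolBeta, agolGamma, hb, hm, zero_mem, one_mem]
  | one => fin_cases i <;> fin_cases j <;> simp [zero_mem, one_mem]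
  | mul x y _ _ hx hy =>
    change (x.1 * y.1) i j ∈ _
    rw [Matrix.mul_apply]
    exact sum_mem fun k _ => mul_mem (hx i k) (hy k j)
  | inv x _ hx =>
    -- In determinant one the inverse is the adjugate, whose entries are those of `x` up to sign.
    change (Matrix.adjugate x.1) i j ∈ _
    rw [Matrix.adjugate_fin_two]
    fin_cases i <;> fin_cases j
    exacts [hx 1 1, neg_mem (hx 0 1), neg_mem (hx 1 0), hx 0 0]

/-- The subgroup of SL(2,ℂ) generated by α, β, γ is discrete: the subspace
topology it inherits from SL(2,ℂ) is the discrete topology. -/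
theorem bicuspid_subgroup_discrete :
    DiscreteTopology
      (Subgroup.closure {agolAlpha, agolBeta, agolGamma} :
        Subgroup (Matrix.SpecialLinearGroup (Fin 2) ℂ)) := by
  let f : (Subgroup.closure {agolAlpha, agolBeta, agolGamma} :
      Subgroup (Matrix.SpecialLinearGroup (Fin 2) ℂ)) → (Fin 2 → Fin 2 → zSqrtNegThree) :=
    fun g i j => ⟨g.1.1 i j, entries_mem_zSqrtNegThree g.2 i j⟩
  have hf : Continuous f := by
    have hcoe : Continuous (fun g : Matrix.SpecialLinearGroup (Fin 2) ℂ =>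
        (g : Matrix (Fin 2) (Fin 2) ℂ)) := continuous_induced_dom
    refine continuous_pi fun i => continuous_pi fun j => Continuous.subtype_mk ?_ _
    exact (hcoe.comp continuous_subtype_val).matrix_elem i j
  have hinj : Function.Injective f := by
    intro g h hgh
    apply Subtype.ext
    apply Subtype.ext
    ext i j
    exact congrArg Subtype.val (congrFun (congrFun hgh i) j)
  exact DiscreteTopology.of_continuous_injective hf hinj
end

section
/- Let α = [[1,4],[0,1]], β = [[1, 1+√3·i],[0,1]], and γ = [[2,−1],[1,0]], regarded as elements of SL(2,ℂ). The subgroup of SL(2,ℂ) generated by α, β, γ is torsion-free: every element of this subgroup other than the identity has infinite order. -/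
/-!
All matrices in the group have entries in `ℤ[√-3]`. Since `(-1)² = -3` in `ℤ/4`, there is a ring
homomorphism `ℤ[√-3] → ℤ/4` with `√-3 ↦ -1`, which kills both `4` and `1 + √-3`. Modulo its kernel
`α` and `β` become trivial, so the group reduces to the powers `γ^k = [[1+k, -k], [k, 1-k]]`
(`exists_lift_of_mem_closure`). Hence every trace reduces to `2`, and `-1` is not in the group.

An element of finite order in `SL(2,ℂ)` has trace `λ + λ⁻¹ = 2 Re λ` for a root of unity `λ`
(`trace_of_pow_eq_one`). A trace in `ℤ[√-3]` that is real, lies in `[-2, 2]` and reduces to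
`2` modulo `4` is `2` or `-2`. An element of finite order with trace `±2` is `±1`
(`eq_one_of_trace_eq_two`), and `-1` is excluded.
-/

open Matrix

/-- The embedding `ℤ[√-3] → ℂ` with `√-3 ↦ √3 · i`. -/
noncomputable def toComplex : ℤ√(-3) →+* ℂ :=
  Zsqrtd.lift ⟨(Real.sqrt 3 : ℂ) * Complex.I, by
    have h : (Real.sqrt 3 : ℂ) * (Real.sqrt 3 : ℂ) = 3 := by
      rw [← Complex.ofReal_mul, Real.mul_self_sqrt (by norm_num)]; norm_num
    have hI := Complex.I_mul_I
    push_cast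
    linear_combination (Complex.I * Complex.I) * h + 3 * hI⟩

/-- The reduction `ℤ[√-3] → ℤ/4` with `√-3 ↦ -1`; its kernel is generated by `1 + √-3`. -/
def toZModFour : ℤ√(-3) →+* ZMod 4 :=
  Zsqrtd.lift ⟨-1, by decide⟩

lemma toComplex_apply (x : ℤ√(-3)) :
    toComplex x = (x.re : ℂ) + (x.im : ℂ) * ((Real.sqrt 3 : ℂ) * Complex.I) := rfl

lemma toZModFour_apply (x : ℤ√(-3)) :
    toZModFour x = (x.re : ZMod 4) + (x.im : ZMod 4) * (-1) := rfl

lemma toComplex_re (x : ℤ√(-3)) : (toComplex x).re = x.re := by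
  simp [toComplex_apply]

lemma toComplex_im (x : ℤ√(-3)) : (toComplex x).im = x.im * Real.sqrt 3 := by
  simp [toComplex_apply]

/-- An element of `ℤ[√-3]` with real image in `ℂ` is an ordinary integer. -/
lemma im_eq_zero_of_toComplex {x : ℤ√(-3)} (h : (toComplex x).im = 0) : x.im = 0 := by
  rw [toComplex_im] at h
  have h3 : Real.sqrt 3 ≠ 0 := by positivity
  simpa [h3] using h

/-- The matrix of each group element lifts to `ℤ[√-3]` with reduction `γ^k` modulo `1 + √-3`. -/
lemma exists_lift_of_mem_closure {g : SpecialLinearGroup (Fin 2) ℂ}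
    (hg : g ∈ Subgroup.closure {agolAlpha, agolBeta, agolGamma}) :
    ∃ M : Matrix (Fin 2) (Fin 2) (ℤ√(-3)), g.1 = M.map toComplex ∧
      ∃ k : ZMod 4, M.map toZModFour = !![1 + k, -k; k, 1 - k] := by
  induction hg using Subgroup.closure_induction with
  | mem x hx =>
    rcases hx with rfl | rfl | rfl
    · refine ⟨!![1, 4; 0, 1], ?_, 0, ?_⟩
      · ext i j
        fin_cases i <;> fin_cases j <;> simp [agolAlpha]
        exact (map_ofNat toComplex 4).symm
      · ext i j
        fin_cases i <;> fin_cases j <;> simp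
        decide
    · refine ⟨!![1, ⟨1, 1⟩; 0, 1], ?_, 0, ?_⟩
      · ext i j
        fin_cases i <;> fin_cases j <;> simp [agolBeta, toComplex_apply]
      · ext i j
        fin_cases i <;> fin_cases j <;> simp [toZModFour_apply]
    · refine ⟨!![2, -1; 1, 0], ?_, 1, ?_⟩
      · ext i j
        fin_cases i <;> fin_cases j <;> simp [agolGamma]
        exact (map_ofNat toComplex 2).symm
      · ext i j
        fin_cases i <;> fin_cases j <;> simp
        decide
  | one =>
    refine ⟨1, ?_, 0, ?_⟩
    · rw [Matrix.map_one _ (map_zero _) (map_one _)]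
      rfl
    · ext i j
      fin_cases i <;> fin_cases j <;> simp
  | mul x y _ _ ihx ihy =>
    obtain ⟨a, ha, k, hk⟩ := ihx
    obtain ⟨b, hb, l, hl⟩ := ihy
    refine ⟨a * b, ?_, k + l, ?_⟩
    · rw [Matrix.map_mul, ← ha, ← hb]
      rfl
    · rw [Matrix.map_mul, hk, hl, mul_fin_two]
      ext i j
      fin_cases i <;> fin_cases j <;> simp <;> ring
  | inv x _ ihx =>
    obtain ⟨a, ha, k, hk⟩ := ihx
    refine ⟨a.adjugate, ?_, -k, ?_⟩
    · have h : toComplex.mapMatrix a.adjugate = (toComplex.mapMatrix a).adjugate :=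
        RingHom.map_adjugate _ _
      rw [RingHom.mapMatrix_apply, RingHom.mapMatrix_apply] at h
      rw [h, ← ha]
      rfl
    · have h : toZModFour.mapMatrix a.adjugate = (toZModFour.mapMatrix a).adjugate :=
        RingHom.map_adjugate _ _
      rw [RingHom.mapMatrix_apply, RingHom.mapMatrix_apply] at h
      rw [h, hk, adjugate_fin_two_of]
      ext i j
      fin_cases i <;> fin_cases j <;> simp; ring

/-- A unipotent `2 × 2` matrix of finite order is trivial: `(A - 1)² = 0` by Cayley–Hamilton, so
`A ^ n = 1 + n (A - 1)`. -/
lemma eq_one_of_trace_eq_two {A : Matrix (Fin 2) (Fin 2) ℂ} (hdet : A.det = 1)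
    (htr : A.trace = 2) {n : ℕ} (hn : n ≠ 0) (hA : A ^ n = 1) : A = 1 := by
  have hsq : (A - 1) * (A - 1) = 0 := by
    rw [det_fin_two] at hdet
    rw [trace_fin_two] at htr
    ext i j
    fin_cases i <;> fin_cases j <;> simp [mul_apply, Fin.sum_univ_two]
    · linear_combination A 0 0 * htr - hdet
    · linear_combination A 0 1 * htr
    · linear_combination A 1 0 * htr
    · linear_combination A 1 1 * htr - hdet
  have hpow : ∀ m : ℕ, A ^ m = 1 + (m : ℂ) • (A - 1) := by
    intro m
    induction m with
    | zero => simp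
    | succ m ih =>
      have hAA : (A - 1) * A = A - 1 := by
        have : (A - 1) * A = (A - 1) * (A - 1) + (A - 1) := by noncomm_ring
        rw [this, hsq, zero_add]
      rw [pow_succ, ih, add_mul, smul_mul_assoc, hAA, one_mul]
      push_cast
      rw [add_smul, one_smul]
      abel
  have h := hpow n
  rw [hA, left_eq_add, smul_eq_zero] at h
  rcases h with h | h
  · exact absurd (by exact_mod_cast h) hn
  · exact sub_eq_zero.mp h

/-- The trace of a finite-order element of `SL(2,ℂ)` is real and lies in `[-2, 2]`: it equals
`2 Re z` for an eigenvalue `z`, and `|z| = 1` because `z` is a root of unity. -/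
lemma trace_of_pow_eq_one {A : Matrix (Fin 2) (Fin 2) ℂ} (hdet : A.det = 1)
    {n : ℕ} (hn : n ≠ 0) (hA : A ^ n = 1) :
    A.trace.im = 0 ∧ |A.trace.re| ≤ 2 := by
  obtain ⟨z, hz⟩ : ∃ z : ℂ, z ^ 2 - A.trace * z + 1 = 0 := by
    obtain ⟨s, hs⟩ := IsAlgClosed.exists_pow_nat_eq (A.trace ^ 2 - 4) (n := 2) (by norm_num)
    exact ⟨(A.trace + s) / 2, by linear_combination hs / 4⟩
  have hdetz : (A - z • (1 : Matrix (Fin 2) (Fin 2) ℂ)).det = 0 := by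
    rw [det_fin_two] at hdet
    rw [trace_fin_two] at hz
    rw [det_fin_two]
    simp
    linear_combination hz + hdet
  obtain ⟨v, hv, hAv⟩ := exists_mulVec_eq_zero_iff.mpr hdetz
  have hAv' : A *ᵥ v = z • v := by
    rwa [sub_mulVec, smul_mulVec, one_mulVec, sub_eq_zero] at hAv
  have hpow : ∀ m : ℕ, (A ^ m) *ᵥ v = z ^ m • v := by
    intro m
    induction m with
    | zero => simp
    | succ m ih =>
      rw [pow_succ, ← mulVec_mulVec, hAv', mulVec_smul, ih, smul_smul, pow_succ, mul_comm]
  have hzn : z ^ n = 1 := by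
    have h := hpow n
    rw [hA, one_mulVec] at h
    exact smul_left_injective ℂ hv (by simpa using h.symm)
  have hnorm : ‖z‖ = 1 := Complex.norm_eq_one_of_pow_eq_one hzn hn
  have hz0 : z ≠ 0 := by
    rintro rfl
    simp at hnorm
  have hconj : z * (starRingEnd ℂ) z = 1 := by
    rw [Complex.mul_conj, Complex.normSq_eq_norm_sq, hnorm]; norm_num
  have htr : A.trace = z + (starRingEnd ℂ) z := by
    apply mul_left_cancel₀ hz0
    linear_combination -hz - hconj
  have hre := Complex.abs_re_le_norm z
  rw [hnorm] at hre
  rw [htr]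
  refine ⟨by simp, ?_⟩
  rw [abs_le] at hre ⊢
  simp only [Complex.add_re, Complex.conj_re]
  constructor <;> linarith

/-- The subgroup of SL(2,ℂ) generated by α, β, γ is torsion-free: every element
other than the identity has infinite order. -/
theorem bicuspid_subgroup_torsionFree
    (g : (Subgroup.closure {agolAlpha, agolBeta, agolGamma} :
      Subgroup (Matrix.SpecialLinearGroup (Fin 2) ℂ)))
    (hg : g ≠ 1) : ¬ IsOfFinOrder g := by
  intro hfin
  obtain ⟨n, hn, hgn⟩ := isOfFinOrder_iff_pow_eq_one.mp hfin
  obtain ⟨g, hmem⟩ := g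
  obtain ⟨M, hM, k, hk⟩ := exists_lift_of_mem_closure hmem
  have hgn' : g ^ n = 1 := congrArg Subtype.val hgn
  have hg1 : g ≠ 1 := fun e => hg (Subtype.ext e)
  obtain ⟨A, hdet⟩ := g
  have hA : A ^ n = 1 := by
    have h := Matrix.SpecialLinearGroup.coe_pow ⟨A, hdet⟩ n
    rw [hgn'] at h
    exact h.symm
  have hA1 : A ≠ 1 := fun e => hg1 (Subtype.ext e)
  have hAij : ∀ i j, A i j = toComplex (M i j) := fun i j => congrFun (congrFun hM i) j
  have hkij : ∀ i j, toZModFour (M i j) = !![1 + k, -k; k, 1 - k] i j :=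
    fun i j => congrFun (congrFun hk i) j
  have htr : A.trace = toComplex (M 0 0 + M 1 1) := by
    rw [trace_fin_two, hAij, hAij, map_add]
  have htr4 : toZModFour (M 0 0 + M 1 1) = 2 := by
    rw [map_add, hkij, hkij]
    simp
    ring
  obtain ⟨him, hre⟩ := trace_of_pow_eq_one hdet hn.ne' hA
  generalize M 0 0 + M 1 1 = t at htr htr4
  rw [htr] at him hre
  have htim := im_eq_zero_of_toComplex him
  rw [toComplex_re] at hre
  have hre' : |t.re| ≤ 2 := by exact_mod_cast hre
  rw [toZModFour_apply, htim] at htr4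
  have hmod : ((t.re - 2 : ℤ) : ZMod 4) = 0 := by
    push_cast
    linear_combination htr4
  rw [ZMod.intCast_zmod_eq_zero_iff_dvd] at hmod
  rw [abs_le] at hre'
  have htcases : t.re = 2 ∨ t.re = -2 := by omega
  rw [toComplex_apply, htim] at htr
  rcases htcases with ht | ht
  · exact hA1 (eq_one_of_trace_eq_two hdet (by simp [htr, ht]) hn.ne' hA)
  · -- `-A` has trace `2` and finite order, so `A = -1`; this contradicts the reduction modulo `4`.
    have hneg : -A = 1 := by
      refine eq_one_of_trace_eq_two (n := 2 * n) ?_ ?_ (by omega) ?_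
      · simp [det_neg, hdet]
      · simp [trace_neg, htr, ht]
      · rw [pow_mul, neg_sq, ← pow_mul, mul_comm, pow_mul, hA, one_pow]
    have hA' : A = -1 := by rw [← hneg, neg_neg]
    have entry : ∀ i j, ∀ m : ℤ, A i j = m → toZModFour (M i j) = m := by
      intro i j m hm
      rw [hAij] at hm
      have h0 : (M i j).im = 0 := im_eq_zero_of_toComplex (by simp [hm])
      have h1 : ((M i j).re : ℝ) = m := by rw [← toComplex_re, hm]; simp
      have h2 : (M i j).re = m := by exact_mod_cast h1
      rw [toZModFour_apply, h0, h2]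
      simp
    have h00 := entry 0 0 (-1) (by simp [hA'])
    have h10 := entry 1 0 0 (by simp [hA'])
    rw [hkij] at h00 h10
    simp at h00 h10
    rw [h10] at h00
    exact absurd h00 (by decide)
end

section
/- Let p be a prime number and let S be a finite set of vectors in ℤ² such that every (a,b) ∈ S is primitive (i.e., a and b are coprime), and such that for any two distinct u = (u₁,u₂) and v = (v₁,v₂) in S one has 0 < |u₁·v₂ − u₂·v₁| < p. Then the cardinality of S is at most p + 1. -/
/-!
Reduction modulo `p` sends each vector of `S` to a point of the projective line over `ZMod p`,
modelled as `Option (ZMod p)` by the slope `a / b`. Two vectors with the same image have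
determinant divisible by `p`; since distinct elements of `S` have determinant strictly between
`0` and `p` in absolute value, the map is injective on `S`, and the line has `p + 1` points.
-/

/-- If `S` is a finite set of primitive vectors in ℤ² such that any two distinct
elements `u`, `v` of `S` satisfy `0 < |u₁·v₂ − u₂·v₁| < p` for a prime `p`, then
`S` has at most `p + 1` elements. -/
theorem card_le_of_pairwise_det_lt_prime (p : ℕ) (hp : p.Prime) (S : Finset (ℤ × ℤ))
    (hprim : ∀ v ∈ S, IsCoprime v.1 v.2)
    (hdist : ∀ u ∈ S, ∀ v ∈ S, u ≠ v →
      0 < |u.1 * v.2 - u.2 * v.1| ∧ |u.1 * v.2 - u.2 * v.1| < (p : ℤ)) :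
    S.card ≤ p + 1 := by
  haveI : Fact p.Prime := ⟨hp⟩
  -- `none` is the point at infinity of the projective line over `ZMod p`.
  let f : ℤ × ℤ → Option (ZMod p) := fun v =>
    if (v.2 : ZMod p) = 0 then none else some ((v.1 : ZMod p) / (v.2 : ZMod p))
  have hinj : Set.InjOn f S := by
    intro u hu v hv huv
    by_contra hne
    obtain ⟨hpos, hlt⟩ := hdist u hu v hv hne
    have hdet : ((u.1 * v.2 - u.2 * v.1 : ℤ) : ZMod p) = 0 := by
      push_cast
      by_cases h1 : (u.2 : ZMod p) = 0 <;> by_cases h2 : (v.2 : ZMod p) = 0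
      · simp [h1, h2]
      · simp [f, h1, h2] at huv
      · simp [f, h1, h2] at huv
      · simp only [f, h1, h2, if_false, Option.some.injEq] at huv
        rw [div_eq_div_iff h1 h2] at huv
        rw [huv]
        ring
    rw [ZMod.intCast_zmod_eq_zero_iff_dvd] at hdet
    exact abs_pos.mp hpos (Int.eq_zero_of_abs_lt_dvd hdet hlt)
  calc S.card ≤ (Finset.univ : Finset (Option (ZMod p))).card :=
        Finset.card_le_card_of_injOn f (fun _ _ => Finset.mem_univ _) hinj
    _ = p + 1 := by simp [ZMod.card]
end

section
/- Let S be a finite set of vectors in ℤ² such that every (a,b) ∈ S is primitive (i.e., a and b are coprime), and such that for any two distinct u = (u₁,u₂) and v = (v₁,v₂) in S one has 1 ≤ |u₁·v₂ − u₂·v₁| ≤ 5. Then the cardinality of S is at most 8. -/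
/-!
The bound comes from reduction modulo the prime 7. A determinant `d` with `1 ≤ |d| ≤ 5` is nonzero
modulo 7, so distinct elements of `S` reduce to distinct points of the projective line over `𝔽₇`,
which has `7 + 1 = 8` points.
-/

/-- The point `[v₁ : v₂]` of the projective line over `𝔽₇`, modelled as `Option (ZMod 7)`:
the affine coordinate is `v₁ / v₂`, and `none` is the point at infinity. A vector that vanishes
modulo 7 is also sent to `none`. -/
def slopeModSeven (v : ℤ × ℤ) : Option (ZMod 7) :=
  if (v.2 : ZMod 7) = 0 then none else some ((v.1 : ZMod 7) * (v.2 : ZMod 7)⁻¹)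

lemma seven_dvd_det_of_slopeModSeven_eq {u v : ℤ × ℤ} (h : slopeModSeven u = slopeModSeven v) :
    (7 : ℤ) ∣ u.1 * v.2 - u.2 * v.1 := by
  haveI : Fact (Nat.Prime 7) := ⟨by norm_num⟩
  refine (ZMod.intCast_zmod_eq_zero_iff_dvd _ 7).1 ?_
  push_cast
  unfold slopeModSeven at h
  split_ifs at h with hu hv hv
  · rw [hu, hv]; ring
  · rw [Option.some.injEq] at h
    field_simp at h
    linear_combination h

/-- If `S` is a finite set of primitive vectors in ℤ² such that any two distinct
elements `u`, `v` of `S` satisfy `1 ≤ |u₁·v₂ − u₂·v₁| ≤ 5`, then `S` has at most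
8 elements: there are at most 8 slopes on a torus with pairwise distance at most 5. -/
theorem card_le_eight_of_pairwise_det_le_five (S : Finset (ℤ × ℤ))
    (hprim : ∀ v ∈ S, IsCoprime v.1 v.2)
    (hdist : ∀ u ∈ S, ∀ v ∈ S, u ≠ v →
      1 ≤ |u.1 * v.2 - u.2 * v.1| ∧ |u.1 * v.2 - u.2 * v.1| ≤ 5) :
    S.card ≤ 8 := by
  have hinj : Set.InjOn slopeModSeven (S : Set (ℤ × ℤ)) := by
    intro u hu v hv huv
    by_contra hne
    obtain ⟨h1, h5⟩ := hdist u hu v hv hne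
    have h7 := Int.le_of_dvd (by omega) ((dvd_abs _ _).2 (seven_dvd_det_of_slopeModSeven_eq huv))
    omega
  calc S.card = (S.image slopeModSeven).card := (Finset.card_image_of_injOn hinj).symm
    _ ≤ Fintype.card (Option (ZMod 7)) := Finset.card_le_univ _
    _ = 8 := by rw [Fintype.card_option, ZMod.card]
end
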